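/- Let q and t be real numbers with q > 1, t > 0, and q³·t < 1. Then the triple series ∑_{X≥1} ∑_{Y≥1} ∑_{Z≥1} q^{3X − 2Y − 3Z} · t^{3X − min(X, Y+2Z) − min(X, 2Y+4Z)} converges and equals q⁻²·t/((1 − q⁻²)·(1 − q⁻³)·(1 − q·t)) + q·t²/((1 − q⁻³)·(1 − t)·(1 − q·t)) + q⁴·t³/((1 − t)·(1 − q·t)·(1 − q³·t²)) + q⁷·t⁵/((1 − q·t)·(1 − q³·t²)·(1 − q⁴·t³)) + q¹⁰·t⁷/((1 − q³·t²)·(1 − q⁴·t³)·(1 − q⁶·t⁴)) + q¹³·t⁹/((1 − q⁴·t³)·(1 − q⁹·t⁶)·(1 − q⁶·t⁴)) + q¹⁶·t¹²/((1 − q⁴·t³)·(1 − q³·t³)·(1 − q⁹·t⁶)). -/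

import Mathlib

theorem pow_mul_pow_lt_one {q t : ℝ} (hq : 1 < q) (ht : 0 < t) (hqt : q ^ 3 * t < 1) {m n : ℕ}
    (hn : n ≠ 0) (hm : m ≤ 3 * n) : q ^ m * t ^ n < 1 := by
  have hq0 : 0 < q := zero_lt_one.trans hq
  calc q ^ m * t ^ n ≤ q ^ (3 * n) * t ^ n := by gcongr; exact hq.le
    _ = (q ^ 3 * t) ^ n := by rw [mul_pow, ← pow_mul]
    _ < 1 := pow_lt_one₀ (by positivity) hqt hn

/-- A nonnegative function on a product whose sections in the second variable have sums `g`
has the same total sum as `g`. -/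
theorem hasSum_prod_of_nonneg {α β : Type*} {f : α × β → ℝ} {g : α → ℝ} {S : ℝ}
    (hf : ∀ p, 0 ≤ f p) (hfg : ∀ a, HasSum (fun b => f (a, b)) (g a)) (hg : HasSum g S) :
    HasSum f S := by
  have hs : Summable f := by
    rw [summable_prod_of_nonneg hf]
    exact ⟨fun a => (hfg a).summable, hg.summable.congr fun a => (hfg a).tsum_eq.symm⟩
  exact (hs.hasSum.prod_fiberwise hfg).unique hg ▸ hs.hasSum

theorem hasSum_pnat_geometric {x : ℝ} (hx0 : 0 ≤ x) (hx1 : x < 1) :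
    HasSum (fun n : ℕ+ => x ^ (n : ℕ)) (x / (1 - x)) := by
  rw [← Equiv.pnatEquivNat.symm.hasSum_iff]
  simpa [Function.comp_def, pow_succ', div_eq_mul_inv] using
    (hasSum_geometric_of_lt_one hx0 hx1).mul_left x

theorem hasSum_pnat_geometric_prod {x y : ℝ} (hx0 : 0 ≤ x) (hx1 : x < 1) (hy0 : 0 ≤ y)
    (hy1 : y < 1) :
    HasSum (fun p : ℕ+ × ℕ+ => x ^ (p.1 : ℕ) * y ^ (p.2 : ℕ)) (x / (1 - x) * (y / (1 - y))) :=
  hasSum_prod_of_nonneg (fun p => by positivity)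
    (fun a => (hasSum_pnat_geometric hy0 hy1).mul_left (x ^ (a : ℕ)))
    ((hasSum_pnat_geometric hx0 hx1).mul_right _)

/-- The sum over `X`, with `s` in the role of `Y + 2 * Z`. It splits into geometric pieces
according to whether `X ≤ s`, `s < X ≤ 2 * s` or `2 * s < X`. -/
theorem hasSum_pnat_min_exponent {q t : ℝ} (hq : 1 < q) (ht : 0 < t) (hqt : q ^ 3 * t < 1)
    (s : ℕ) :
    HasSum
      (fun X : ℕ+ => q ^ (3 * (X : ℕ)) *
        t ^ (3 * ((X : ℕ) : ℤ) - min ((X : ℕ) : ℤ) (s : ℤ) - min ((X : ℕ) : ℤ) (2 * (s : ℤ))))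
      (q ^ 3 * t / (1 - q ^ 3 * t) +
        (q ^ 3 * t ^ 2 / (1 - q ^ 3 * t ^ 2) - q ^ 3 * t / (1 - q ^ 3 * t)) * (q ^ 3 * t) ^ s +
        (q ^ 3 * t ^ 3 / (1 - q ^ 3 * t ^ 3) - q ^ 3 * t ^ 2 / (1 - q ^ 3 * t ^ 2)) *
          (q ^ 6 * t ^ 3) ^ s) := by
  have hq0 : 0 < q := zero_lt_one.trans hq
  have hb : q ^ 3 * t ^ 2 < 1 := pow_mul_pow_lt_one hq ht hqt (by norm_num) (by norm_num)
  have hc : q ^ 3 * t ^ 3 < 1 := pow_mul_pow_lt_one hq ht hqt (by norm_num) (by norm_num)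
  rw [← Equiv.pnatEquivNat.symm.hasSum_iff, ← hasSum_nat_add_iff' (s + s), Finset.sum_range_add]
  have hlow : ∀ i ∈ Finset.range s, q ^ (3 * (i + 1)) *
      t ^ (3 * ((i + 1 : ℕ) : ℤ) - min ((i + 1 : ℕ) : ℤ) (s : ℤ) -
        min ((i + 1 : ℕ) : ℤ) (2 * (s : ℤ))) = q ^ 3 * t * (q ^ 3 * t) ^ i := by
    intro i hi
    rw [Finset.mem_range] at hi
    rw [show (3 * ((i + 1 : ℕ) : ℤ) - min ((i + 1 : ℕ) : ℤ) (s : ℤ) -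
        min ((i + 1 : ℕ) : ℤ) (2 * (s : ℤ))) = ((i + 1 : ℕ) : ℤ) by omega, zpow_natCast]
    ring
  have hmid : ∀ i ∈ Finset.range s, q ^ (3 * (s + i + 1)) *
      t ^ (3 * ((s + i + 1 : ℕ) : ℤ) - min ((s + i + 1 : ℕ) : ℤ) (s : ℤ) -
        min ((s + i + 1 : ℕ) : ℤ) (2 * (s : ℤ))) =
      (q ^ 3 * t) ^ s * (q ^ 3 * t ^ 2) * (q ^ 3 * t ^ 2) ^ i := by
    intro i hi
    rw [Finset.mem_range] at hi
    rw [show (3 * ((s + i + 1 : ℕ) : ℤ) - min ((s + i + 1 : ℕ) : ℤ) (s : ℤ) -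
        min ((s + i + 1 : ℕ) : ℤ) (2 * (s : ℤ))) = ((s + 2 * i + 2 : ℕ) : ℤ) by omega,
      zpow_natCast]
    ring
  have hhigh : ∀ i : ℕ, q ^ (3 * (i + (s + s) + 1)) *
      t ^ (3 * ((i + (s + s) + 1 : ℕ) : ℤ) - min ((i + (s + s) + 1 : ℕ) : ℤ) (s : ℤ) -
        min ((i + (s + s) + 1 : ℕ) : ℤ) (2 * (s : ℤ))) =
      (q ^ 6 * t ^ 3) ^ s * (q ^ 3 * t ^ 3) * (q ^ 3 * t ^ 3) ^ i := by
    intro i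
    rw [show (3 * ((i + (s + s) + 1 : ℕ) : ℤ) - min ((i + (s + s) + 1 : ℕ) : ℤ) (s : ℤ) -
        min ((i + (s + s) + 1 : ℕ) : ℤ) (2 * (s : ℤ))) = ((3 * s + 3 * i + 3 : ℕ) : ℤ) by omega,
      zpow_natCast]
    ring
  simp only [Function.comp_def, Equiv.pnatEquivNat_symm_apply, Nat.succPNat_coe,
    Nat.succ_eq_add_one]
  rw [Finset.sum_congr rfl hlow, Finset.sum_congr rfl hmid, ← Finset.mul_sum, ← Finset.mul_sum,
    geom_sum_eq hqt.ne, geom_sum_eq hb.ne]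
  simp only [hhigh]
  convert (hasSum_geometric_of_lt_one (by positivity) hc).mul_left
    ((q ^ 6 * t ^ 3) ^ s * (q ^ 3 * t ^ 3)) using 1
  · rfl
  have hmul : (q ^ 6 * t ^ 3) ^ s = (q ^ 3 * t) ^ s * (q ^ 3 * t ^ 2) ^ s := by
    rw [← mul_pow]; ring
  rw [hmul]
  generalize (q ^ 3 * t) ^ s = A
  generalize (q ^ 3 * t ^ 2) ^ s = B
  generalize q ^ 3 * t = a at *
  generalize q ^ 3 * t ^ 2 = b at *
  generalize q ^ 3 * t ^ 3 = c at *
  have ha' : 1 - a ≠ 0 := by linarith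
  have hb' : 1 - b ≠ 0 := by linarith
  have hc' : 1 - c ≠ 0 := by linarith
  rw [← neg_sub 1 a, ← neg_sub 1 b]
  field_simp
  ring

/-- The value of the iterated geometric sums agrees with the sum over seven simplicial cones. -/
theorem geometric_value_eq_cone_sum {q t : ℝ} (hq : 1 < q) (ht : 0 < t) (hqt : q ^ 3 * t < 1) :
    q ^ 3 * t / (1 - q ^ 3 * t) *
          (q⁻¹ ^ 2 / (1 - q⁻¹ ^ 2) * (q⁻¹ ^ 3 / (1 - q⁻¹ ^ 3))) +
        (q ^ 3 * t ^ 2 / (1 - q ^ 3 * t ^ 2) - q ^ 3 * t / (1 - q ^ 3 * t)) *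
          (q * t / (1 - q * t) * (q ^ 3 * t ^ 2 / (1 - q ^ 3 * t ^ 2))) +
        (q ^ 3 * t ^ 3 / (1 - q ^ 3 * t ^ 3) - q ^ 3 * t ^ 2 / (1 - q ^ 3 * t ^ 2)) *
          (q ^ 4 * t ^ 3 / (1 - q ^ 4 * t ^ 3) * (q ^ 9 * t ^ 6 / (1 - q ^ 9 * t ^ 6))) =
      q⁻¹ ^ 2 * t / ((1 - q⁻¹ ^ 2) * (1 - q⁻¹ ^ 3) * (1 - q * t)) +
        q * t ^ 2 / ((1 - q⁻¹ ^ 3) * (1 - t) * (1 - q * t)) +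
        q ^ 4 * t ^ 3 / ((1 - t) * (1 - q * t) * (1 - q ^ 3 * t ^ 2)) +
        q ^ 7 * t ^ 5 / ((1 - q * t) * (1 - q ^ 3 * t ^ 2) * (1 - q ^ 4 * t ^ 3)) +
        q ^ 10 * t ^ 7 /
          ((1 - q ^ 3 * t ^ 2) * (1 - q ^ 4 * t ^ 3) * (1 - q ^ 6 * t ^ 4)) +
        q ^ 13 * t ^ 9 /
          ((1 - q ^ 4 * t ^ 3) * (1 - q ^ 9 * t ^ 6) * (1 - q ^ 6 * t ^ 4)) +
        q ^ 16 * t ^ 12 /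
          ((1 - q ^ 4 * t ^ 3) * (1 - q ^ 3 * t ^ 3) * (1 - q ^ 9 * t ^ 6)) := by
  have hq0 : 0 < q := zero_lt_one.trans hq
  have hne : ∀ m n : ℕ, n ≠ 0 → m ≤ 3 * n → 1 - q ^ m * t ^ n ≠ 0 := fun m n hn hm =>
    (sub_pos.2 (pow_mul_pow_lt_one hq ht hqt hn hm)).ne'
  have h01 : 1 - t ≠ 0 := by simpa using hne 0 1 (by norm_num) (by norm_num)
  have h11 : 1 - q * t ≠ 0 := by simpa using hne 1 1 (by norm_num) (by norm_num)
  have h31 : 1 - q ^ 3 * t ≠ 0 := by simpa using hne 3 1 (by norm_num) (by norm_num)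
  have h32 := hne 3 2 (by norm_num) (by norm_num)
  have h33 := hne 3 3 (by norm_num) (by norm_num)
  have h43 := hne 4 3 (by norm_num) (by norm_num)
  have h64 := hne 6 4 (by norm_num) (by norm_num)
  have h96 := hne 9 6 (by norm_num) (by norm_num)
  have hq2 : q ^ 2 - 1 ≠ 0 := (sub_pos.2 (one_lt_pow₀ hq (by norm_num))).ne'
  have hq3 : q ^ 3 - 1 ≠ 0 := (sub_pos.2 (one_lt_pow₀ hq (by norm_num))).ne'
  have e2 : 1 - q⁻¹ ^ 2 = (q ^ 2 - 1) / q ^ 2 := by field_simp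
  have e3 : 1 - q⁻¹ ^ 3 = (q ^ 3 - 1) / q ^ 3 := by field_simp
  rw [e2, e3]
  clear hne e2 e3
  field_simp
  ring

/-- The series computing 𝒵₃₂₂ₐ:
    ∑_{X,Y,Z≥1} q^{3X-2Y-3Z} t^{3X-min(X,Y+2Z)-min(X,2Y+4Z)}. -/
theorem heisenberg_Z322a (q t : ℝ) (hq : 1 < q) (ht : 0 < t) (hqt : q ^ 3 * t < 1) :
    HasSum
      (fun p : ℕ+ × ℕ+ × ℕ+ =>
        q ^ (3 * ((p.1 : ℕ) : ℤ) - 2 * ((p.2.1 : ℕ) : ℤ) - 3 * ((p.2.2 : ℕ) : ℤ)) *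
          t ^ (3 * ((p.1 : ℕ) : ℤ) -
            min ((p.1 : ℕ) : ℤ) (((p.2.1 : ℕ) : ℤ) + 2 * ((p.2.2 : ℕ) : ℤ)) -
            min ((p.1 : ℕ) : ℤ) (2 * ((p.2.1 : ℕ) : ℤ) + 4 * ((p.2.2 : ℕ) : ℤ))))
      (q⁻¹ ^ 2 * t / ((1 - q⁻¹ ^ 2) * (1 - q⁻¹ ^ 3) * (1 - q * t)) +
        q * t ^ 2 / ((1 - q⁻¹ ^ 3) * (1 - t) * (1 - q * t)) +
        q ^ 4 * t ^ 3 / ((1 - t) * (1 - q * t) * (1 - q ^ 3 * t ^ 2)) +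
        q ^ 7 * t ^ 5 / ((1 - q * t) * (1 - q ^ 3 * t ^ 2) * (1 - q ^ 4 * t ^ 3)) +
        q ^ 10 * t ^ 7 /
          ((1 - q ^ 3 * t ^ 2) * (1 - q ^ 4 * t ^ 3) * (1 - q ^ 6 * t ^ 4)) +
        q ^ 13 * t ^ 9 /
          ((1 - q ^ 4 * t ^ 3) * (1 - q ^ 9 * t ^ 6) * (1 - q ^ 6 * t ^ 4)) +
        q ^ 16 * t ^ 12 /
          ((1 - q ^ 4 * t ^ 3) * (1 - q ^ 3 * t ^ 3) * (1 - q ^ 9 * t ^ 6))) := by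
  have hq0 : 0 < q := zero_lt_one.trans hq
  have hinv : ∀ n : ℕ, n ≠ 0 → q⁻¹ ^ n < 1 := fun n hn =>
    pow_lt_one₀ (by positivity) (inv_lt_one_of_one_lt₀ hq) hn
  have hS₁ := hasSum_pnat_geometric_prod (by positivity) (hinv 2 two_ne_zero) (by positivity)
    (hinv 3 three_ne_zero)
  have hS₂ := hasSum_pnat_geometric_prod (x := q * t) (by positivity)
    (by simpa using pow_mul_pow_lt_one hq ht hqt (m := 1) (n := 1) (by norm_num) (by norm_num))
    (by positivity) (pow_mul_pow_lt_one hq ht hqt (m := 3) (n := 2) (by norm_num) (by norm_num))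
  have hS₃ := hasSum_pnat_geometric_prod (by positivity)
    (pow_mul_pow_lt_one hq ht hqt (m := 4) (n := 3) (by norm_num) (by norm_num))
    (by positivity) (pow_mul_pow_lt_one hq ht hqt (m := 9) (n := 6) (by norm_num) (by norm_num))
  rw [← geometric_value_eq_cone_sum hq ht hqt, ← (Equiv.prodComm _ _).hasSum_iff]
  refine hasSum_prod_of_nonneg (fun p => by dsimp; positivity) ?_
    (((hS₁.mul_left _).add (hS₂.mul_left _)).add (hS₃.mul_left _))
  rintro ⟨Y, Z⟩
  have hX := (hasSum_pnat_min_exponent hq ht hqt ((Y : ℕ) + 2 * (Z : ℕ))).mul_left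
    ((q⁻¹ ^ 2) ^ (Y : ℕ) * (q⁻¹ ^ 3) ^ (Z : ℕ))
  have e₁ : q * t = q⁻¹ ^ 2 * (q ^ 3 * t) := by field_simp
  have e₂ : q ^ 3 * t ^ 2 = q⁻¹ ^ 3 * (q ^ 3 * t) ^ 2 := by field_simp
  have e₃ : q ^ 4 * t ^ 3 = q⁻¹ ^ 2 * (q ^ 6 * t ^ 3) := by field_simp
  have e₄ : q ^ 9 * t ^ 6 = q⁻¹ ^ 3 * (q ^ 6 * t ^ 3) ^ 2 := by field_simp
  convert hX using 1
  · rfl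
  · funext X
    have hexp : q ^ (3 * ((X : ℕ) : ℤ) - 2 * ((Y : ℕ) : ℤ) - 3 * ((Z : ℕ) : ℤ)) =
        (q⁻¹ ^ 2) ^ (Y : ℕ) * (q⁻¹ ^ 3) ^ (Z : ℕ) * q ^ (3 * (X : ℕ)) := by
      rw [zpow_sub₀ hq0.ne', zpow_sub₀ hq0.ne', ← pow_mul, ← pow_mul, inv_pow, inv_pow]
      norm_cast
      field_simp
    simp only [Function.comp_def, Equiv.prodComm_apply, Prod.swap_prod_mk]
    rw [hexp, ← mul_assoc]
    push_cast
    ring_nf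
  · have h₂ : (q * t) ^ (Y : ℕ) * (q ^ 3 * t ^ 2) ^ (Z : ℕ) =
        (q⁻¹ ^ 2) ^ (Y : ℕ) * (q⁻¹ ^ 3) ^ (Z : ℕ) * (q ^ 3 * t) ^ ((Y : ℕ) + 2 * (Z : ℕ)) := by
      rw [e₁, e₂, mul_pow, mul_pow _ _ (Z : ℕ), pow_add, pow_mul]; ring
    have h₃ : (q ^ 4 * t ^ 3) ^ (Y : ℕ) * (q ^ 9 * t ^ 6) ^ (Z : ℕ) =
        (q⁻¹ ^ 2) ^ (Y : ℕ) * (q⁻¹ ^ 3) ^ (Z : ℕ) * (q ^ 6 * t ^ 3) ^ ((Y : ℕ) + 2 * (Z : ℕ)) := by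
      rw [e₃, e₄, mul_pow, mul_pow _ _ (Z : ℕ), pow_add, pow_mul]; ring
    rw [h₂, h₃]
    ring
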